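/- Let $G$ be a finite simple graph on $n$ vertices with nonnegative edge weights $w : E \to \mathbb{R}_{\ge 0}$ and weighted combinatorial Laplacian $L_G$. Then for every real $d > 1$ there exist nonnegative edge weights $w' : E \to \mathbb{R}_{\ge 0}$ that are nonzero on at most $\lceil d (n-1) \rceil$ edges such that the reweighted Laplacian $L_H$ satisfies, for all $x \in \mathbb{R}^V$, $x^\top L_G x \le x^\top L_H x \le \frac{d + 1 + 2\sqrt{d}}{d + 1 - 2\sqrt{d}} \, x^\top L_G x$. -/

import Mathlib

open Matrix Finset

/-- The weighted combinatorial Laplacian `∑_{(i,j) ∈ E} w(i,j) (eᵢ-eⱼ)(eᵢ-eⱼ)ᵀ`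
associated with a symmetric weight function `w` (each unordered edge counted once,
whence the factor `1/2` in front of the sum over ordered pairs). -/
noncomputable def weightedLapMatrix {n : ℕ} (w : Fin n → Fin n → ℝ) :
    Matrix (Fin n) (Fin n) ℝ :=
  (1 / 2 : ℝ) • ∑ i : Fin n, ∑ j : Fin n,
    w i j • Matrix.vecMulVec (Pi.single i (1 : ℝ) - Pi.single j 1)
      (Pi.single i (1 : ℝ) - Pi.single j 1)

section BSS

set_option linter.unusedSectionVars false

variable {κ : Type*} [Fintype κ] [DecidableEq κ]

lemma bss_eig (M : Matrix κ κ ℝ) (hM : M.IsHermitian) (c : ℝ)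
    (hc : ∀ i, 0 < hM.eigenvalues i + c) :
    (M + c • (1 : Matrix κ κ ℝ)).PosDef ∧
    (M + c • (1 : Matrix κ κ ℝ))⁻¹.trace = ∑ i, (hM.eigenvalues i + c)⁻¹ ∧
    ((M + c • (1 : Matrix κ κ ℝ))⁻¹ * (M + c • (1 : Matrix κ κ ℝ))⁻¹).trace
      = ∑ i, ((hM.eigenvalues i + c)⁻¹) ^ 2 := by
  set m := hM.eigenvalues with hm
  set U : Matrix κ κ ℝ := (hM.eigenvectorUnitary : Matrix κ κ ℝ) with hU
  have hUU : star U * U = 1 := Unitary.coe_star_mul_self hM.eigenvectorUnitary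
  have hUU' : U * star U = 1 := Unitary.coe_mul_star_self hM.eigenvectorUnitary
  have hsp : M = U * diagonal m * star U := by
    have := hM.spectral_theorem
    rw [Unitary.conjStarAlgAut_apply] at this
    exact this
  have hN : M + c • (1 : Matrix κ κ ℝ) = U * diagonal (fun i => m i + c) * star U := by
    have : diagonal (fun i => m i + c) = diagonal m + c • (1 : Matrix κ κ ℝ) := by
      rw [← diagonal_one, ← diagonal_smul, diagonal_add]
      congr 1; ext i; simp
    rw [this, Matrix.mul_add, Matrix.add_mul, ← hsp]
    simp [hUU']
  have hinv : (M + c • (1 : Matrix κ κ ℝ))⁻¹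
      = U * diagonal (fun i => (m i + c)⁻¹) * star U := by
    apply Matrix.inv_eq_right_inv
    rw [hN]
    calc U * diagonal (fun i => m i + c) * star U * (U * diagonal (fun i => (m i + c)⁻¹) * star U)
        = U * diagonal (fun i => m i + c) * (star U * U) * diagonal (fun i => (m i + c)⁻¹) * star U := by
          simp only [Matrix.mul_assoc]
      _ = U * (diagonal (fun i => m i + c) * diagonal (fun i => (m i + c)⁻¹)) * star U := by
          rw [hUU, Matrix.mul_one]; simp only [Matrix.mul_assoc]
      _ = 1 := by
          rw [diagonal_mul_diagonal]
          have : (fun i => (m i + c) * (m i + c)⁻¹) = fun _ => (1 : ℝ) := by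
            ext i; exact mul_inv_cancel₀ (hc i).ne'
          rw [this, diagonal_one, Matrix.mul_one, hUU']
  refine ⟨?_, ?_, ?_⟩
  · rw [hN]
    have hd : (diagonal (fun i => m i + c)).PosDef := PosDef.diagonal hc
    have := hd.mul_mul_conjTranspose_same (B := U) (by
      apply Matrix.vecMul_injective_of_isUnit
      exact IsUnit.of_mul_eq_one _ hUU')
    exact this
  · rw [hinv, Matrix.trace_mul_comm, ← Matrix.mul_assoc, hUU, Matrix.one_mul, trace_diagonal]
  · have : U * diagonal (fun i => (m i + c)⁻¹) * star U * (U * diagonal (fun i => (m i + c)⁻¹) * star U)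
        = U * (diagonal (fun i => (m i + c)⁻¹) * diagonal (fun i => (m i + c)⁻¹)) * star U := by
      calc _ = U * diagonal (fun i => (m i + c)⁻¹) * (star U * U) * diagonal (fun i => (m i + c)⁻¹) * star U := by
            simp only [Matrix.mul_assoc]
        _ = _ := by rw [hUU, Matrix.mul_one]; simp only [Matrix.mul_assoc]
    rw [hinv, this, Matrix.trace_mul_comm, ← Matrix.mul_assoc, hUU, Matrix.one_mul,
      diagonal_mul_diagonal, trace_diagonal]
    simp only [sq]

lemma bss_upper_pot [Nonempty κ] (M : Matrix κ κ ℝ) (hM : M.PosDef) (δ : ℝ) (hδ : 0 < δ) :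
    (M + δ • (1 : Matrix κ κ ℝ)).PosDef ∧
    (M + δ • (1 : Matrix κ κ ℝ))⁻¹.trace < M⁻¹.trace ∧
    δ * ((M + δ • (1 : Matrix κ κ ℝ))⁻¹ * (M + δ • (1 : Matrix κ κ ℝ))⁻¹).trace
      ≤ M⁻¹.trace - (M + δ • (1 : Matrix κ κ ℝ))⁻¹.trace := by
  have hpos := hM.eigenvalues_pos
  obtain ⟨h1, h2, h3⟩ := bss_eig M hM.1 δ (fun i => by have := hpos i; linarith)
  obtain ⟨-, h5, -⟩ := bss_eig M hM.1 0 (fun i => by have := hpos i; linarith)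
  simp only [zero_smul, add_zero] at h5
  refine ⟨h1, ?_, ?_⟩
  · rw [h2, h5]
    apply Finset.sum_lt_sum_of_nonempty Finset.univ_nonempty
    intro i _
    exact inv_strictAnti₀ (hpos i) (by linarith)
  · rw [h2, h3, h5, ← Finset.sum_sub_distrib, Finset.mul_sum]
    apply Finset.sum_le_sum
    intro i _
    have := hpos i
    set a := hM.1.eigenvalues i
    have : a⁻¹ - (a + δ)⁻¹ - δ * ((a + δ)⁻¹) ^ 2 = δ ^ 2 * (a⁻¹ * ((a + δ)⁻¹) ^ 2) := by
      have : a + δ ≠ 0 := by positivity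
      field_simp
      ring
    have h : 0 ≤ δ ^ 2 * (a⁻¹ * ((a + δ)⁻¹) ^ 2) := by positivity
    linarith

lemma bss_lower_pot [Nonempty κ] (M : Matrix κ κ ℝ) (hM : M.PosDef) (δ : ℝ) (hδ : 0 < δ)
    (hΦ : δ * M⁻¹.trace < 1) :
    (M - δ • (1 : Matrix κ κ ℝ)).PosDef ∧
    M⁻¹.trace < (M - δ • (1 : Matrix κ κ ℝ))⁻¹.trace ∧
    ((M - δ • (1 : Matrix κ κ ℝ))⁻¹.trace - M⁻¹.trace) *
      (1 / δ + ((M - δ • (1 : Matrix κ κ ℝ))⁻¹.trace - M⁻¹.trace)) ≤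
     ((M - δ • (1 : Matrix κ κ ℝ))⁻¹ * (M - δ • (1 : Matrix κ κ ℝ))⁻¹).trace := by
  have hpos := hM.eigenvalues_pos
  obtain ⟨-, h5, -⟩ := bss_eig M hM.1 0 (fun i => by have := hpos i; linarith)
  simp only [zero_smul, add_zero] at h5
  have hgt : ∀ i, 0 < hM.1.eigenvalues i + -δ := by
    intro i
    have h1 : (hM.1.eigenvalues i)⁻¹ ≤ M⁻¹.trace := by
      rw [h5]
      exact Finset.single_le_sum (f := fun i => (hM.1.eigenvalues i)⁻¹)
        (fun j _ => (inv_pos.2 (hpos j)).le) (Finset.mem_univ i)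
    have h2 : δ * (hM.1.eigenvalues i)⁻¹ < 1 :=
      lt_of_le_of_lt (mul_le_mul_of_nonneg_left h1 hδ.le) hΦ
    rw [← div_eq_mul_inv, div_lt_one (hpos i)] at h2
    linarith
  obtain ⟨h1, h2, h3⟩ := bss_eig M hM.1 (-δ) hgt
  rw [neg_smul, ← sub_eq_add_neg] at h1 h2 h3
  refine ⟨h1, ?_, ?_⟩
  · rw [h2, h5]
    apply Finset.sum_lt_sum_of_nonempty Finset.univ_nonempty
    intro i _
    exact inv_strictAnti₀ (hgt i) (by linarith)
  · rw [h2, h3]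
    rw [h5] at hΦ ⊢
    obtain ⟨b, hb⟩ : ∃ b, b = hM.1.eigenvalues := ⟨_, rfl⟩
    rw [← hb] at hΦ hpos hgt ⊢
    have hgt' : ∀ i, b i - δ ≠ 0 := fun i => by have := hgt i; intro h; linarith
    simp only [← sub_eq_add_neg]
    have hD : ∑ i, (b i - δ)⁻¹ - ∑ i, (b i)⁻¹ = δ * ∑ i, (b i - δ)⁻¹ * (b i)⁻¹ := by
      rw [← Finset.sum_sub_distrib, Finset.mul_sum]
      refine Finset.sum_congr rfl fun i _ => ?_
      have := hgt' i
      have := (hpos i).ne'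
      field_simp
      ring
    have hcs : (∑ i, (b i - δ)⁻¹ * (b i)⁻¹) ^ 2 ≤
        (∑ i, ((b i - δ)⁻¹) ^ 2 * (b i)⁻¹) * ∑ i, (b i)⁻¹ := by
      apply Finset.sum_sq_le_sum_mul_sum_of_sq_le_mul
      · intro i _; have := hpos i; positivity
      · intro i _; have := hpos i; positivity
      · intro i _; apply le_of_eq; ring
    have hS : ∑ i, ((b i - δ)⁻¹) ^ 2 = ∑ i, (b i - δ)⁻¹ * (b i)⁻¹ +
        δ * ∑ i, ((b i - δ)⁻¹) ^ 2 * (b i)⁻¹ := by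
      rw [Finset.mul_sum, ← Finset.sum_add_distrib]
      refine Finset.sum_congr rfl fun i _ => ?_
      have := hgt' i
      have := (hpos i).ne'
      field_simp
      ring
    have hT : 0 ≤ ∑ i, ((b i - δ)⁻¹) ^ 2 * (b i)⁻¹ :=
      Finset.sum_nonneg fun i _ => by have := hpos i; positivity
    rw [hD, hS]
    set X := ∑ i, (b i - δ)⁻¹ * (b i)⁻¹
    set T := ∑ i, ((b i - δ)⁻¹) ^ 2 * (b i)⁻¹
    set P := ∑ i, (b i)⁻¹
    have e : δ * X * (1 / δ + δ * X) = X + δ * (δ * X ^ 2) := by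
      field_simp
    rw [e]
    have h6 : δ * X ^ 2 ≤ δ * (T * P) := mul_le_mul_of_nonneg_left hcs hδ.le
    have h7 : T * (δ * P) ≤ T * 1 := mul_le_mul_of_nonneg_left hΦ.le hT
    have : δ * X ^ 2 ≤ T := by linarith
    nlinarith

/-- Sherman–Morrison, trace form. -/
lemma bss_sm (M : Matrix κ κ ℝ) (hM : M.PosDef) (v : κ → ℝ) (τ : ℝ)
    (hτ : 1 + τ * (v ⬝ᵥ M⁻¹ *ᵥ v) ≠ 0) :
    (M + τ • vecMulVec v v)⁻¹.trace = M⁻¹.trace -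
      τ / (1 + τ * (v ⬝ᵥ M⁻¹ *ᵥ v)) * ((M⁻¹ *ᵥ v) ⬝ᵥ (M⁻¹ *ᵥ v)) := by
  have hu : IsUnit M.det := hM.det_pos.ne'.isUnit
  have hMi : M * M⁻¹ = 1 := Matrix.mul_nonsing_inv M hu
  have hsymm : M⁻¹ᵀ = M⁻¹ := hM.inv.1
  set y := M⁻¹ *ᵥ v with hy
  have hMy : M *ᵥ y = v := by rw [hy, mulVec_mulVec, hMi, one_mulVec]
  have hvM : v ᵥ* M⁻¹ = y := by rw [hy, ← hsymm, mulVec_transpose, hsymm]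
  set p := v ⬝ᵥ y
  have : (M + τ • vecMulVec v v)⁻¹ = M⁻¹ - (τ / (1 + τ * p)) • vecMulVec y y := by
    apply Matrix.inv_eq_right_inv
    rw [Matrix.add_mul, Matrix.mul_sub, Matrix.mul_sub, hMi, Matrix.mul_smul, mul_vecMulVec, hMy,
      Matrix.smul_mul, vecMulVec_mul, hvM, Matrix.smul_mul, Matrix.mul_smul,
      vecMulVec_mul_vecMulVec, vecMulVec_smul, smul_smul, smul_smul]
    change 1 - (τ / (1 + τ * p)) • vecMulVec v y + (τ • vecMulVec v y - (τ * (τ / (1 + τ * p)) * p) • vecMulVec v y) = 1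
    have : τ * (τ / (1 + τ * p)) * p = τ - τ / (1 + τ * p) := by
      field_simp
      ring
    rw [this, sub_smul]; abel
  rw [this, trace_sub, trace_smul, trace_vecMulVec, smul_eq_mul]

lemma bss_quad (M : Matrix κ κ ℝ) (v x : κ → ℝ) (τ : ℝ) :
    x ⬝ᵥ (M + τ • vecMulVec v v) *ᵥ x = x ⬝ᵥ M *ᵥ x + τ * (v ⬝ᵥ x) ^ 2 := by
  rw [add_mulVec, smul_mulVec, vecMulVec_mulVec, dotProduct_add, dotProduct_smul]
  simp only [dotProduct_smul, smul_eq_mul, MulOpposite.smul_eq_mul_unop, MulOpposite.unop_op]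
  rw [dotProduct_comm x v]; ring

lemma bss_herm (M : Matrix κ κ ℝ) (hM : M.IsHermitian) (v : κ → ℝ) (τ : ℝ) :
    (M + τ • vecMulVec v v).IsHermitian := by
  apply hM.add
  ext i j
  simp [vecMulVec_apply, mul_comm]

lemma bss_posdef (M : Matrix κ κ ℝ) (hM : M.PosDef) (v : κ → ℝ) (τ : ℝ)
    (hτ : 0 < 1 + τ * (v ⬝ᵥ M⁻¹ *ᵥ v)) : (M + τ • vecMulVec v v).PosDef := by
  apply PosDef.of_dotProduct_mulVec_pos (bss_herm M hM.1 v τ)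
  intro x hx
  rw [star_trivial, bss_quad]
  have hxM : 0 < x ⬝ᵥ M *ᵥ x := by simpa using hM.dotProduct_mulVec_pos hx
  by_cases hv : v = 0
  · subst hv; simpa using hxM
  rcases le_or_gt 0 τ with h0 | h0
  · positivity
  have hp : 0 < v ⬝ᵥ M⁻¹ *ᵥ v := by simpa using hM.inv.dotProduct_mulVec_pos hv
  have hu : IsUnit M.det := hM.det_pos.ne'.isUnit
  have hMi : M * M⁻¹ = 1 := Matrix.mul_nonsing_inv M hu
  set y := M⁻¹ *ᵥ v with hy
  have hMy : M *ᵥ y = v := by rw [hy, mulVec_mulVec, hMi, one_mulVec]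
  have hsymm : Mᵀ = M := hM.1
  have hyM : y ⬝ᵥ M *ᵥ x = v ⬝ᵥ x := by
    rw [dotProduct_mulVec, ← mulVec_transpose, hsymm, hMy]
  set p := v ⬝ᵥ y
  have hcs : (v ⬝ᵥ x) ^ 2 ≤ p * (x ⬝ᵥ M *ᵥ x) := by
    set c := (v ⬝ᵥ x) / p with hc
    have h := hM.posSemidef.dotProduct_mulVec_nonneg (x - c • y)
    rw [star_trivial, mulVec_sub, mulVec_smul, hMy, sub_dotProduct, dotProduct_sub, dotProduct_sub,
      dotProduct_smul, dotProduct_smul, smul_dotProduct, smul_dotProduct, hyM,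
      dotProduct_comm x v, dotProduct_comm y v] at h
    simp only [smul_eq_mul] at h
    have hcp : c * p = v ⬝ᵥ x := by rw [hc]; field_simp
    change 0 ≤ _ - c * (v ⬝ᵥ x) - (c * (v ⬝ᵥ x) - c * (c * p)) at h
    rw [← hcp] at h ⊢
    nlinarith
  nlinarith

lemma bss_sum_dot {ι : Type*} [Fintype ι] (v : ι → κ → ℝ)
    (hv : ∑ i, vecMulVec (v i) (v i) = 1) (K : Matrix κ κ ℝ) :
    ∑ i, v i ⬝ᵥ K *ᵥ v i = K.trace := by
  calc ∑ i, v i ⬝ᵥ K *ᵥ v i = ∑ i, (K * vecMulVec (v i) (v i)).trace := by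
        refine Finset.sum_congr rfl fun i _ => ?_
        rw [mul_vecMulVec, trace_vecMulVec, dotProduct_comm]
    _ = K.trace := by rw [← trace_sum, ← Matrix.mul_sum, hv, Matrix.mul_one]

lemma bss_sum_dot2 {ι : Type*} [Fintype ι] (v : ι → κ → ℝ)
    (hv : ∑ i, vecMulVec (v i) (v i) = 1) (K : Matrix κ κ ℝ) (hK : K.IsHermitian) :
    ∑ i, (K *ᵥ v i) ⬝ᵥ (K *ᵥ v i) = (K * K).trace := by
  have hK' : Kᵀ = K := hK
  rw [← bss_sum_dot v hv]
  refine Finset.sum_congr rfl fun i _ => ?_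
  rw [← mulVec_mulVec, dotProduct_mulVec (v i), ← mulVec_transpose, hK']

/-- The barrier invariant. -/
def BssInv (A : Matrix κ κ ℝ) (l u εL εU : ℝ) : Prop :=
  (u • (1 : Matrix κ κ ℝ) - A).PosDef ∧ (u • (1 : Matrix κ κ ℝ) - A)⁻¹.trace ≤ εU ∧
  (A - l • (1 : Matrix κ κ ℝ)).PosDef ∧ (A - l • (1 : Matrix κ κ ℝ))⁻¹.trace ≤ εL

lemma bss_step [Nonempty κ] {ι : Type*} [Fintype ι] (v : ι → κ → ℝ)
    (hv : ∑ i, vecMulVec (v i) (v i) = 1) (A : Matrix κ κ ℝ) (l u εL εU δL δU : ℝ)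
    (hδL : 0 < δL) (hδU : 0 < δU) (hε : δL * εL < 1) (h : 1 / δU + εU ≤ 1 / δL - εL)
    (hA : BssInv A l u εL εU) :
    ∃ i, ∃ t : ℝ, 0 ≤ t ∧
      BssInv (A + t • vecMulVec (v i) (v i)) (l + δL) (u + δU) εL εU := by
  obtain ⟨hU, hΦU, hL, hΦL⟩ := hA
  obtain ⟨hN, hNt, hNS⟩ := bss_upper_pot _ hU δU hδU
  obtain ⟨hR, hRt, hRS⟩ := bss_lower_pot _ hL δL hδL
    (lt_of_le_of_lt (mul_le_mul_of_nonneg_left hΦL hδL.le) hε)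
  set M := u • (1 : Matrix κ κ ℝ) - A with hMdef
  set M' := A - l • (1 : Matrix κ κ ℝ) with hM'def
  set N := M + δU • (1 : Matrix κ κ ℝ) with hNdef
  set R := M' - δL • (1 : Matrix κ κ ℝ) with hRdef
  set DU := M⁻¹.trace - N⁻¹.trace with hDU
  set DL := R⁻¹.trace - M'⁻¹.trace with hDL
  have hDUp : 0 < DU := by linarith
  have hDLp : 0 < DL := by linarith
  let f : ι → ℝ := fun i => ((N⁻¹ *ᵥ v i) ⬝ᵥ (N⁻¹ *ᵥ v i)) / DU + v i ⬝ᵥ N⁻¹ *ᵥ v i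
  let g : ι → ℝ := fun i => ((R⁻¹ *ᵥ v i) ⬝ᵥ (R⁻¹ *ᵥ v i)) / DL - v i ⬝ᵥ R⁻¹ *ᵥ v i
  have hf : ∑ i, f i ≤ 1 / δU + εU := by
    simp only [f]
    rw [Finset.sum_add_distrib, ← Finset.sum_div, bss_sum_dot v hv, bss_sum_dot2 v hv _ hN.inv.1]
    have : (N⁻¹ * N⁻¹).trace / DU ≤ 1 / δU := by
      rw [div_le_div_iff₀ hDUp hδU]; linarith
    linarith
  have hg : 1 / δL - εL ≤ ∑ i, g i := by
    simp only [g]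
    rw [Finset.sum_sub_distrib, ← Finset.sum_div, bss_sum_dot v hv, bss_sum_dot2 v hv _ hR.inv.1]
    have : 1 / δL + DL ≤ (R⁻¹ * R⁻¹).trace / DL := by
      rw [le_div_iff₀ hDLp]; linarith
    linarith
  have hex : ∃ i, v i ≠ 0 ∧ f i ≤ g i := by
    by_contra hcon
    push Not at hcon
    have h0 : ∃ i, v i ≠ 0 := by
      by_contra h0
      push Not at h0
      have : (1 : Matrix κ κ ℝ) = 0 := by rw [← hv]; simp [h0]
      exact one_ne_zero this
    obtain ⟨i, hi⟩ := h0
    have : ∑ i, g i < ∑ i, f i := by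
      apply Finset.sum_lt_sum
      · intro j _
        by_cases hj : v j = 0
        · simp [f, g, hj]
        · exact (hcon j hj).le
      · exact ⟨i, Finset.mem_univ i, hcon i hi⟩
    linarith
  obtain ⟨i, hvi, hfg⟩ := hex
  have hp : 0 < v i ⬝ᵥ N⁻¹ *ᵥ v i := by simpa using hN.inv.dotProduct_mulVec_pos hvi
  have hq : 0 < v i ⬝ᵥ R⁻¹ *ᵥ v i := by simpa using hR.inv.dotProduct_mulVec_pos hvi
  have hyy : 0 < (N⁻¹ *ᵥ v i) ⬝ᵥ (N⁻¹ *ᵥ v i) := by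
    have hne : N⁻¹ *ᵥ v i ≠ 0 := by
      intro h0
      rw [h0] at hp; simp at hp
    have := dotProduct_star_self_pos_iff.2 hne
    simpa using this
  simp only [f, g] at hfg
  obtain ⟨Y, hY⟩ : ∃ Y, Y = (N⁻¹ *ᵥ v i) ⬝ᵥ (N⁻¹ *ᵥ v i) := ⟨_, rfl⟩
  obtain ⟨Z, hZ⟩ : ∃ Z, Z = (R⁻¹ *ᵥ v i) ⬝ᵥ (R⁻¹ *ᵥ v i) := ⟨_, rfl⟩
  obtain ⟨p, hpd⟩ : ∃ p, p = v i ⬝ᵥ N⁻¹ *ᵥ v i := ⟨_, rfl⟩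
  obtain ⟨q, hqd⟩ : ∃ q, q = v i ⬝ᵥ R⁻¹ *ᵥ v i := ⟨_, rfl⟩
  rw [← hY, ← hpd, ← hZ, ← hqd] at hfg
  rw [← hpd] at hp
  rw [← hqd] at hq
  rw [← hY] at hyy
  obtain ⟨r, hr⟩ : ∃ r, r = Y / DU + p := ⟨_, rfl⟩
  have hYD : 0 < Y / DU := by positivity
  have hr0 : 0 < r := by linarith
  have hrp : 0 < r - p := by linarith
  refine ⟨i, r⁻¹, by positivity, ?_⟩
  have e1 : (u + δU) • (1 : Matrix κ κ ℝ) - (A + r⁻¹ • vecMulVec (v i) (v i))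
      = N + (-r⁻¹) • vecMulVec (v i) (v i) := by
    rw [hNdef, hMdef, add_smul, neg_smul]; abel
  have e2 : (A + r⁻¹ • vecMulVec (v i) (v i)) - (l + δL) • (1 : Matrix κ κ ℝ)
      = R + r⁻¹ • vecMulVec (v i) (v i) := by
    rw [hRdef, hM'def, add_smul]; abel
  have c1 : 0 < 1 + (-r⁻¹) * (v i ⬝ᵥ N⁻¹ *ᵥ v i) := by
    rw [← hpd]
    have : 1 + (-r⁻¹) * p = (r - p) / r := by field_simp; ring
    rw [this]; positivity
  have c2 : 0 < 1 + r⁻¹ * (v i ⬝ᵥ R⁻¹ *ᵥ v i) := by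
    rw [← hqd]; positivity
  refine ⟨?_, ?_, ?_, ?_⟩
  · rw [e1]; exact bss_posdef N hN _ _ c1
  · rw [e1, bss_sm N hN _ _ c1.ne', ← hpd, ← hY]
    have : (-r⁻¹) / (1 + (-r⁻¹) * p) * Y = - DU := by
      have h1 : 1 + (-r⁻¹) * p = (r - p) / r := by field_simp; ring
      rw [h1]
      have h2 : r - p = Y / DU := by linarith
      rw [h2]; field_simp
    linarith
  · rw [e2]; exact bss_posdef R hR _ _ c2
  · rw [e2, bss_sm R hR _ _ c2.ne', ← hqd, ← hZ]
    have h1 : r⁻¹ / (1 + r⁻¹ * q) * Z = Z / (r + q) := by field_simp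
    have h2 : DL ≤ Z / (r + q) := by
      rw [le_div_iff₀ (by linarith)]
      have : r + q ≤ Z / DL := by linarith
      rw [le_div_iff₀ hDLp] at this
      linarith
    linarith

lemma bss_iter [Nonempty κ] {ι : Type*} [Fintype ι] [DecidableEq ι] (v : ι → κ → ℝ)
    (hv : ∑ i, vecMulVec (v i) (v i) = 1) (l u εL εU δL δU : ℝ)
    (hδL : 0 < δL) (hδU : 0 < δU) (hε : δL * εL < 1) (h : 1 / δU + εU ≤ 1 / δL - εL)
    (h0 : BssInv (0 : Matrix κ κ ℝ) l u εL εU) (q : ℕ) :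
    ∃ s : ι → ℝ, (∀ i, 0 ≤ s i) ∧ (Finset.univ.filter (fun i => s i ≠ 0)).card ≤ q ∧
      BssInv (∑ i, s i • vecMulVec (v i) (v i)) (l + q * δL) (u + q * δU) εL εU := by
  induction q with
  | zero => exact ⟨fun _ => 0, by simp, by simp, by simpa using h0⟩
  | succ q ih =>
    obtain ⟨s, hs, hc, hI⟩ := ih
    obtain ⟨i, t, ht, hI'⟩ := bss_step v hv _ _ _ _ _ δL δU hδL hδU hε h hI
    refine ⟨s + Pi.single i t, ?_, ?_, ?_⟩
    · intro j
      have : 0 ≤ (Pi.single i t : ι → ℝ) j := by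
        by_cases hj : j = i
        · subst hj; simpa using ht
        · simp [hj]
      exact add_nonneg (hs j) this
    · calc _ ≤ (insert i (Finset.univ.filter (fun i => s i ≠ 0))).card := by
            apply Finset.card_le_card
            intro j hj
            by_cases hji : j = i
            · simp [hji]
            · simpa [hji] using hj
        _ ≤ _ := (Finset.card_insert_le _ _).trans (by omega)
    · convert hI' using 1
      · simp only [Pi.add_apply, add_smul, Finset.sum_add_distrib]
        congr 1
        rw [Finset.sum_eq_single i]
        · simp
        · intro j _ hj; simp [hj]
        · simp
      · push_cast; ring
      · push_cast; ring

lemma bss_start [Nonempty κ] (l u : ℝ) (hl : 0 < l) (hu : 0 < u) :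
    BssInv (0 : Matrix κ κ ℝ) (-l) u (Fintype.card κ / l) (Fintype.card κ / u) := by
  have key : ∀ c : ℝ, 0 < c → (c • (1 : Matrix κ κ ℝ)).PosDef ∧
      (c • (1 : Matrix κ κ ℝ))⁻¹.trace = Fintype.card κ / c := by
    intro c hc
    refine ⟨PosDef.one.smul hc, ?_⟩
    have : (c • (1 : Matrix κ κ ℝ))⁻¹ = c⁻¹ • 1 := by
      apply Matrix.inv_eq_right_inv
      rw [Matrix.smul_mul, Matrix.one_mul, smul_smul, mul_inv_cancel₀ hc.ne', one_smul]
    rw [this, trace_smul, trace_one, smul_eq_mul]; ring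
  have k1 := key u hu
  have k2 := key l hl
  refine ⟨?_, ?_, ?_, ?_⟩
  · simpa using k1.1
  · simpa using k1.2.le
  · simpa using k2.1
  · simpa using k2.2.le

lemma bss_quad_sum {ι : Type*} [Fintype ι] (v : ι → κ → ℝ) (s : ι → ℝ) (x : κ → ℝ) :
    x ⬝ᵥ (∑ i, s i • vecMulVec (v i) (v i)) *ᵥ x = ∑ i, s i * (v i ⬝ᵥ x) ^ 2 := by
  rw [sum_mulVec, dotProduct_sum]
  refine Finset.sum_congr rfl fun i _ => ?_
  have := bss_quad 0 (v i) x (s i)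
  simpa using this

lemma bss_main [Nonempty κ] {ι : Type*} [Fintype ι] [DecidableEq ι] (v : ι → κ → ℝ)
    (hv : ∑ i, vecMulVec (v i) (v i) = 1) (d : ℝ) (hd : 1 < d) :
    ∃ s : ι → ℝ, (∀ i, 0 ≤ s i) ∧
      (Finset.univ.filter (fun i => s i ≠ 0)).card ≤ ⌈d * (Fintype.card κ : ℝ)⌉₊ ∧
      ∀ x : κ → ℝ, x ⬝ᵥ x ≤ ∑ i, s i * (v i ⬝ᵥ x) ^ 2 ∧
        ∑ i, s i * (v i ⬝ᵥ x) ^ 2 ≤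
          (d + 1 + 2 * Real.sqrt d) / (d + 1 - 2 * Real.sqrt d) * (x ⬝ᵥ x) := by
  set r := Real.sqrt d with hr
  have hr1 : 1 < r := by rw [hr, Real.lt_sqrt (by norm_num)]; simpa using hd
  have hrd : d = r ^ 2 := (Real.sq_sqrt (by linarith)).symm
  set k : ℝ := (Fintype.card κ : ℝ) with hk
  have hk0 : 0 < k := by rw [hk]; exact_mod_cast Fintype.card_pos
  set q := ⌈d * k⌉₊ with hq
  have hqd : r ^ 2 * k ≤ q := by rw [← hrd]; exact Nat.le_ceil _
  have hr1' : 0 < r - 1 := by linarith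
  have hr0 : 0 < r := by linarith
  have hu : 0 < k * r * (r + 1) / (r - 1) := by positivity
  have hl : 0 < k * r := by positivity
  have h0 := bss_start (κ := κ) _ _ hl hu
  obtain ⟨s, hs, hc, h1, -, h2, -⟩ := bss_iter v hv _ _ _ _ 1 ((r + 1) / (r - 1)) one_pos
    (by positivity) (by
      rw [← hk, one_mul]
      have : k / (k * r) = 1 / r := by field_simp
      rw [this, div_lt_one hr0]; exact hr1) (by
      rw [← hk]
      apply le_of_eq
      field_simp) h0 q
  obtain ⟨L, hL⟩ : ∃ L, L = -(k * r) + (q : ℝ) * 1 := ⟨_, rfl⟩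
  rw [← hL] at h2
  have hLpos : 0 < L := by
    have : k * r < r ^ 2 * k := by nlinarith [mul_pos hl hr1']
    linarith
  refine ⟨fun i => s i / L, fun i => div_nonneg (hs i) hLpos.le, ?_, ?_⟩
  · simpa [hLpos.ne'] using hc
  intro x
  have e : ∑ i, s i / L * (v i ⬝ᵥ x) ^ 2 = (∑ i, s i * (v i ⬝ᵥ x) ^ 2) / L := by
    rw [Finset.sum_div]
    exact Finset.sum_congr rfl fun i _ => by ring
  rw [e]
  have g1 := h1.posSemidef.dotProduct_mulVec_nonneg x
  have g2 := h2.posSemidef.dotProduct_mulVec_nonneg x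
  rw [star_trivial, sub_mulVec, dotProduct_sub, bss_quad_sum, smul_mulVec, one_mulVec,
    dotProduct_smul, smul_eq_mul] at g1 g2
  have hxx : 0 ≤ x ⬝ᵥ x := by
    simpa using dotProduct_star_self_nonneg x
  constructor
  · rw [le_div_iff₀ hLpos]; linarith
  · rw [div_le_iff₀ hLpos]
    have key : k * r * (r + 1) / (r - 1) + q * ((r + 1) / (r - 1)) ≤
        (d + 1 + 2 * r) / (d + 1 - 2 * r) * L := by
      have e1 : (d + 1 + 2 * r) / (d + 1 - 2 * r) = ((r + 1) / (r - 1)) * ((r + 1) / (r - 1)) := by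
        rw [div_mul_div_comm, hrd]; congr 1 <;> ring
      have e2 : k * r * (r + 1) / (r - 1) + q * ((r + 1) / (r - 1))
          = ((r + 1) / (r - 1)) * (k * r + q) := by ring
      rw [e1, e2, mul_assoc]
      apply mul_le_mul_of_nonneg_left _ (by positivity)
      rw [div_mul_eq_mul_div, le_div_iff₀ hr1', hL]
      nlinarith
    have := mul_le_mul_of_nonneg_right key hxx
    linarith

end BSS

/-- Sparsification of a sum of squares of linear forms vanishing on the constants. -/
lemma bss_reduce {n : ℕ} {ι : Type*} [Fintype ι] [DecidableEq ι] (b : ι → Fin n → ℝ)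
    (hb : ∀ i, b i ⬝ᵥ (fun _ => 1) = 0) (d : ℝ) (hd : 1 < d) :
    ∃ s : ι → ℝ, (∀ i, 0 ≤ s i) ∧
      (Finset.univ.filter (fun i => s i ≠ 0)).card ≤ ⌈d * ((n : ℝ) - 1)⌉₊ ∧
      ∀ x : Fin n → ℝ, ∑ i, (b i ⬝ᵥ x) ^ 2 ≤ ∑ i, s i * (b i ⬝ᵥ x) ^ 2 ∧
        ∑ i, s i * (b i ⬝ᵥ x) ^ 2 ≤
          (d + 1 + 2 * Real.sqrt d) / (d + 1 - 2 * Real.sqrt d) * ∑ i, (b i ⬝ᵥ x) ^ 2 := by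
  set L : Matrix (Fin n) (Fin n) ℝ := ∑ i, (1 : ℝ) • vecMulVec (b i) (b i) with hL
  have hLq : ∀ x, x ⬝ᵥ L *ᵥ x = ∑ i, (b i ⬝ᵥ x) ^ 2 := fun x => by
    rw [hL, bss_quad_sum]; simp
  have hLv : ∀ x, L *ᵥ x = ∑ i, (b i ⬝ᵥ x) • b i := fun x => by
    rw [hL, sum_mulVec]
    refine Finset.sum_congr rfl fun i _ => ?_
    rw [one_smul, vecMulVec_mulVec]; simp
  have hH : L.IsHermitian := by
    ext i j
    simp [hL, Matrix.sum_apply, vecMulVec_apply, mul_comm]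
  set lam := hH.eigenvalues with hlam
  let u : Fin n → Fin n → ℝ := fun j => (hH.eigenvectorBasis j).ofLp
  have hLu : ∀ j, L *ᵥ u j = lam j • u j := fun j => hH.mulVec_eigenvectorBasis j
  have horth : ∀ i j, u i ⬝ᵥ u j = if i = j then 1 else 0 := fun i j => by
    have := (orthonormal_iff_ite.1 hH.eigenvectorBasis.orthonormal) i j
    rw [← this, EuclideanSpace.inner_eq_star_dotProduct, star_trivial, dotProduct_comm]
  have hexp : ∀ x y : Fin n → ℝ, x ⬝ᵥ y = ∑ j, (u j ⬝ᵥ x) * (u j ⬝ᵥ y) := fun x y => by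
    have := hH.eigenvectorBasis.sum_inner_mul_inner (WithLp.toLp 2 x) (WithLp.toLp 2 y)
    simp only [EuclideanSpace.inner_eq_star_dotProduct, star_trivial] at this
    rw [dotProduct_comm x y, ← this]
    refine Finset.sum_congr rfl fun j _ => ?_
    rw [dotProduct_comm y]
  have hLuu : ∀ i j, u i ⬝ᵥ L *ᵥ u j = if i = j then lam j else 0 := fun i j => by
    rw [hLu, dotProduct_smul, horth]; split_ifs <;> simp
  have hsq : ∀ j, ∑ i, (b i ⬝ᵥ u j) ^ 2 = lam j := fun j => by
    rw [← hLq, hLuu]; simp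
  have hnn : ∀ j, 0 ≤ lam j := fun j => by
    rw [← hsq]; exact Finset.sum_nonneg fun i _ => sq_nonneg _
  have hz : ∀ i j, lam j = 0 → u j ⬝ᵥ b i = 0 := fun i j hj => by
    have h := hsq j
    rw [hj, Finset.sum_eq_zero_iff_of_nonneg (fun i _ => sq_nonneg _)] at h
    have := h i (Finset.mem_univ i)
    rw [dotProduct_comm]; exact pow_eq_zero_iff (two_ne_zero) |>.1 this
  let κ := {j // lam j ≠ 0}
  let v : ι → κ → ℝ := fun i j => (Real.sqrt (lam j))⁻¹ * (u j ⬝ᵥ b i)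
  let T : (Fin n → ℝ) → κ → ℝ := fun x j => Real.sqrt (lam j) * (u j ⬝ᵥ x)
  have hsp : ∀ j : κ, 0 < Real.sqrt (lam j) := fun j =>
    Real.sqrt_pos.2 (lt_of_le_of_ne (hnn j) (Ne.symm j.2))
  have hvT : ∀ i x, b i ⬝ᵥ x = v i ⬝ᵥ T x := fun i x => by
    rw [hexp]
    simp only [dotProduct, v, T]
    have h1 : ∑ j : κ, (u j ⬝ᵥ b i) * (u j ⬝ᵥ x) = ∑ j, (u j ⬝ᵥ b i) * (u j ⬝ᵥ x) := by
      have h2 := Finset.sum_subtype (F := (inferInstance : Fintype κ)) (p := fun j => lam j ≠ 0) (Finset.univ.filter (fun j => lam j ≠ 0))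
        (by simp) (fun j => (u j ⬝ᵥ b i) * (u j ⬝ᵥ x))
      rw [← h2]
      apply Finset.sum_subset (Finset.subset_univ _)
      intro j _ hj
      have : lam j = 0 := by simpa using hj
      rw [hz i j this, zero_mul]
    rw [show (∑ j, (∑ a, u j a * b i a) * ∑ a, u j a * x a)
      = ∑ j, (u j ⬝ᵥ b i) * (u j ⬝ᵥ x) from rfl, ← h1]
    refine Finset.sum_congr rfl fun j _ => ?_
    have := (hsp j).ne'
    field_simp
    rfl
  have hv : ∑ i, vecMulVec (v i) (v i) = 1 := by
    ext j k
    have hjk : ∑ i, (u j ⬝ᵥ b i) * (u k ⬝ᵥ b i) = if (j : Fin n) = k then lam k else 0 := by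
      rw [← hLuu, hLv, dotProduct_sum]
      refine Finset.sum_congr rfl fun i _ => ?_
      rw [dotProduct_smul, smul_eq_mul, dotProduct_comm (b i), mul_comm]
    rw [Matrix.sum_apply]
    simp only [vecMulVec_apply, v]
    calc _ = (Real.sqrt (lam j))⁻¹ * (Real.sqrt (lam k))⁻¹ *
          ∑ i, (u j ⬝ᵥ b i) * (u k ⬝ᵥ b i) := by
          rw [Finset.mul_sum]
          exact Finset.sum_congr rfl fun i _ => by ring
      _ = _ := by
          rw [hjk, Matrix.one_apply]
          by_cases h : j = k
          · subst h
            have h1 := (hsp j).ne'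
            have h2 := Real.mul_self_sqrt (hnn j)
            simp only [if_true]
            field_simp
            rw [sq, h2]
          · have : (j : Fin n) ≠ k := fun h' => h (Subtype.ext h')
            simp [h, this]
  have hTT : ∀ x, ∑ i, (b i ⬝ᵥ x) ^ 2 = T x ⬝ᵥ T x := fun x => by
    have := bss_quad_sum v (fun _ => 1) (T x)
    simp only [one_smul, one_mul, hv, one_mulVec] at this
    rw [this]
    exact Finset.sum_congr rfl fun i _ => by rw [hvT]
  by_cases hκ : Nonempty κ
  · obtain ⟨s, hs, hc, hx⟩ := bss_main v hv d hd
    refine ⟨s, hs, hc.trans ?_, fun x => ?_⟩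
    · apply Nat.ceil_le_ceil
      apply mul_le_mul_of_nonneg_left _ (by linarith)
      have hcard : Fintype.card κ < n := by
        have hr : L.rank = Fintype.card κ := hH.rank_eq_card_non_zero_eigs
        rw [← hr]
        by_contra hcon
        have hfull : L.rank = Fintype.card (Fin n) := by
          apply le_antisymm (Matrix.rank_le_card_width L)
          simpa using hcon
        have hn0 : 0 < n := by
          obtain ⟨j⟩ := hκ
          exact (Nat.zero_le _).trans_lt j.1.2
        have hdet : L.det = 0 := by
          apply Matrix.exists_mulVec_eq_zero_iff.1
          refine ⟨fun _ => 1, ?_, ?_⟩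
          · intro h
            have := congrFun h ⟨0, hn0⟩
            simp at this
          · rw [hLv]; simp [hb]
        have hprod := hH.det_eq_prod_eigenvalues
        rw [hdet] at hprod
        obtain ⟨j, -, hj⟩ := Finset.prod_eq_zero_iff.1 hprod.symm
        have hlt : Fintype.card κ < Fintype.card (Fin n) := Fintype.card_subtype_lt (x := j) (by
          simpa using hj)
        omega
      have : (Fintype.card κ : ℝ) + 1 ≤ n := by exact_mod_cast hcard
      linarith
    · have := hx (T x)
      simp only [← hvT, ← hTT] at this
      exact this
  · refine ⟨fun _ => 0, by simp, by simp, fun x => ?_⟩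
    have : ∑ i, (b i ⬝ᵥ x) ^ 2 = 0 := by
      rw [hTT]
      rw [not_nonempty_iff] at hκ
      simp [dotProduct]
    rw [this]; simp

lemma lap_quad {n : ℕ} (w : Fin n → Fin n → ℝ) (hsym : ∀ i j, w i j = w j i) (x : Fin n → ℝ) :
    x ⬝ᵥ (weightedLapMatrix w).mulVec x =
      ∑ p : Fin n × Fin n, if p.1 < p.2 then w p.1 p.2 * (x p.1 - x p.2) ^ 2 else 0 := by
  have h1 : x ⬝ᵥ (weightedLapMatrix w).mulVec x
      = (1 / 2) * ∑ i, ∑ j, w i j * (x i - x j) ^ 2 := by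
    rw [weightedLapMatrix, smul_mulVec, dotProduct_smul, smul_eq_mul, sum_mulVec, dotProduct_sum]
    congr 1
    refine Finset.sum_congr rfl fun i _ => ?_
    refine (bss_quad_sum (fun j => (Pi.single i (1 : ℝ) : Fin n → ℝ) - Pi.single j 1)
      (fun j => w i j) x).trans ?_
    refine Finset.sum_congr rfl fun j _ => ?_
    rw [sub_dotProduct]; simp
  have h2 : ∀ i j, w i j * (x i - x j) ^ 2 =
      (if i < j then w i j * (x i - x j) ^ 2 else 0) +
      (if j < i then w j i * (x j - x i) ^ 2 else 0) := by
    intro i j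
    rcases lt_trichotomy i j with h | h | h
    · simp [h, h.not_gt]
    · subst h; simp
    · simp only [h, h.not_gt, if_true, if_false]; rw [hsym i j]; ring
  rw [h1, Fintype.sum_prod_type]
  have h3 : ∑ i, ∑ j, w i j * (x i - x j) ^ 2 =
      ∑ i, ∑ j, (if i < j then w i j * (x i - x j) ^ 2 else 0) +
      ∑ i, ∑ j, (if j < i then w j i * (x j - x i) ^ 2 else 0) := by
    simp only [← Finset.sum_add_distrib]
    exact Finset.sum_congr rfl fun i _ => Finset.sum_congr rfl fun j _ => h2 i j
  rw [h3, Finset.sum_comm (f := fun i j => if j < i then w j i * (x j - x i) ^ 2 else 0)]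
  ring

/-- **Twice-Ramanujan spectral sparsifiers.**  For every weighted finite simple graph
`G` on `n` vertices (weights `w` nonnegative, symmetric, supported on the edges of `G`)
and every real `d > 1`, there exist nonnegative weights `w'` on the edges of `G`,
nonzero on at most `⌈d (n-1)⌉` edges, such that for all `x ∈ ℝ^V`
`xᵀ L_G x ≤ xᵀ L_H x ≤ ((d + 1 + 2√d)/(d + 1 - 2√d)) xᵀ L_G x`. -/
theorem exists_spectral_sparsifier
    {n : ℕ} (G : SimpleGraph (Fin n)) (w : Fin n → Fin n → ℝ)
    (hsym : ∀ i j, w i j = w j i) (hnn : ∀ i j, 0 ≤ w i j)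
    (hsupp : ∀ i j, w i j ≠ 0 → G.Adj i j)
    (d : ℝ) (hd : 1 < d) :
    ∃ w' : Fin n → Fin n → ℝ,
      (∀ i j, w' i j = w' j i) ∧ (∀ i j, 0 ≤ w' i j) ∧
      (∀ i j, w' i j ≠ 0 → G.Adj i j) ∧
      (Finset.univ.filter
          (fun p : Fin n × Fin n => p.1 < p.2 ∧ w' p.1 p.2 ≠ 0)).card ≤
        ⌈d * ((n : ℝ) - 1)⌉₊ ∧
      ∀ x : Fin n → ℝ,
        x ⬝ᵥ (weightedLapMatrix w).mulVec x ≤ x ⬝ᵥ (weightedLapMatrix w').mulVec x ∧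
        x ⬝ᵥ (weightedLapMatrix w').mulVec x ≤
          ((d + 1 + 2 * Real.sqrt d) / (d + 1 - 2 * Real.sqrt d)) *
            (x ⬝ᵥ (weightedLapMatrix w).mulVec x) := by
  let b : Fin n × Fin n → Fin n → ℝ := fun p =>
    if p.1 < p.2 then Real.sqrt (w p.1 p.2) • (Pi.single p.1 (1 : ℝ) - Pi.single p.2 1) else 0
  have hb : ∀ p x, (b p ⬝ᵥ x) = if p.1 < p.2 then Real.sqrt (w p.1 p.2) * (x p.1 - x p.2) else 0 := by
    intro p x
    simp only [b]
    split_ifs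
    · rw [smul_dotProduct, sub_dotProduct]; simp
    · simp
  have hb2 : ∀ p x, (b p ⬝ᵥ x) ^ 2 = if p.1 < p.2 then w p.1 p.2 * (x p.1 - x p.2) ^ 2 else 0 := by
    intro p x
    rw [hb]
    split_ifs
    · rw [mul_pow, Real.sq_sqrt (hnn _ _)]
    · simp
  obtain ⟨s, hs, hc, hx⟩ := bss_reduce b (fun p => by rw [hb]; simp) d hd
  have hsym' : ∀ i j, s (min i j, max i j) * w i j = s (min j i, max j i) * w j i := by
    intro i j; rw [min_comm, max_comm, hsym]
  refine ⟨fun i j => s (min i j, max i j) * w i j, hsym',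
    fun i j => mul_nonneg (hs _) (hnn _ _), fun i j h => hsupp i j (right_ne_zero_of_mul h), ?_, ?_⟩
  · refine le_trans (Finset.card_le_card ?_) hc
    intro p hp
    simp only [Finset.mem_filter, Finset.mem_univ, true_and] at hp ⊢
    obtain ⟨hlt, hne⟩ := hp
    have := left_ne_zero_of_mul hne
    rwa [min_eq_left hlt.le, max_eq_right hlt.le] at this
  · intro x
    rw [lap_quad w hsym, lap_quad _ hsym']
    have e1 : ∑ p : Fin n × Fin n, (if p.1 < p.2 then w p.1 p.2 * (x p.1 - x p.2) ^ 2 else 0)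
        = ∑ p, (b p ⬝ᵥ x) ^ 2 := Finset.sum_congr rfl fun p _ => (hb2 p x).symm
    have e2 : ∑ p : Fin n × Fin n, (if p.1 < p.2 then
        s (min p.1 p.2, max p.1 p.2) * w p.1 p.2 * (x p.1 - x p.2) ^ 2 else 0)
        = ∑ p, s p * (b p ⬝ᵥ x) ^ 2 := by
      refine Finset.sum_congr rfl fun p _ => ?_
      rw [hb2]
      split_ifs with h
      · rw [min_eq_left h.le, max_eq_right h.le]; ring
      · simp
    rw [e1, e2]
    exact hx x
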